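/- Let Φ = ∀X ∃Y ψ be a quantified Boolean formula, where ψ is a propositional formula over the disjoint atom sets X and Y, let u be a fresh atom, and let φ = ψ ∨ u. Then Φ is true if and only if CIRC(φ; u; Y) ⊨ ¬u, i.e., every model of φ that is minimal in u while Y varies and X stays fixed satisfies ¬u. -/

import Mathlib

/-!
STATEMENT 5: ordinary circumscription expresses the QBF `Φ = ∀X ∃Y ψ`:
`Φ` is true iff `CIRC(ψ ∨ u; u; Y) ⊨ ¬u`.
-/

namespace NestedCirc

universe u
variable {α : Type u}

/-- Propositional formulas over atoms `α`. -/
inductive PForm (α : Type u) : Type u where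
  | tru : PForm α
  | fls : PForm α
  | atom : α → PForm α
  | neg : PForm α → PForm α
  | conj : PForm α → PForm α → PForm α
  | disj : PForm α → PForm α → PForm α

namespace PForm

/-- Satisfaction of a propositional formula in an interpretation (set of true atoms). -/
def sat : PForm α → Set α → Prop
  | tru, _ => True
  | fls, _ => False
  | atom a, M => a ∈ M
  | neg φ, M => ¬ φ.sat M
  | conj φ ψ, M => φ.sat M ∧ ψ.sat M
  | disj φ ψ, M => φ.sat M ∨ ψ.sat M

/-- Implication `φ → ψ`. -/
def imp (φ ψ : PForm α) : PForm α := disj (neg φ) ψ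

/-- Equivalence `φ ↔ ψ`. -/
def iffF (φ ψ : PForm α) : PForm α := conj (imp φ ψ) (imp ψ φ)

/-- The atoms occurring in a formula. -/
def atoms : PForm α → Set α
  | tru => ∅
  | fls => ∅
  | atom a => {a}
  | neg φ => φ.atoms
  | conj φ ψ => φ.atoms ∪ ψ.atoms
  | disj φ ψ => φ.atoms ∪ ψ.atoms

/-- Conjunction of a list of formulas. -/
def conjList (l : List (PForm α)) : PForm α := l.foldr conj tru

end PForm

/-- `M ≤_{P;Z} M'` : `M` agrees with `M'` on the fixed atoms `(P ∪ Z)ᶜ`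
and is smaller or equal on the minimized atoms `P`. -/
def lePZ (P Z M M' : Set α) : Prop :=
  M ∩ P ⊆ M' ∩ P ∧ M ∩ (P ∪ Z)ᶜ = M' ∩ (P ∪ Z)ᶜ

/-- `M <_{P;Z} M'` (strict preference). -/
def ltPZ (P Z M M' : Set α) : Prop := lePZ P Z M M' ∧ ¬ lePZ P Z M' M

/-!
A model of `ψ ∨ u` containing `u` fails to be minimal exactly when some model of `ψ` avoiding `u`
agrees with it on the fixed atoms, because the disjunct `u` is available to every interpretation
containing `u` but to none strictly preferred to it. Since membership of `u` does not affect the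
fixed atoms, `CIRC(ψ ∨ u; u; Y) ⊨ ¬u` says that every assignment to the fixed atoms extends to a
model of `ψ` avoiding `u`. As `ψ` only sees `X` and `Y`, this is the truth of `∀X ∃Y ψ`.
-/

/-- `M` is a model of the circumscription `CIRC(φ; P; Z)`: a model of `φ` to which no model of `φ`
is strictly preferred when `P` is minimized and `Z` varies. -/
def IsCircModel (φ : PForm α) (P Z M : Set α) : Prop :=
  φ.sat M ∧ ∀ N : Set α, φ.sat N → ¬ ltPZ P Z N M

/-- Entailment `CIRC(φ; P; Z) ⊨ χ`. -/
def CircEntails (φ : PForm α) (P Z : Set α) (χ : PForm α) : Prop :=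
  ∀ M : Set α, IsCircModel φ P Z M → χ.sat M

theorem PForm.sat_inter_iff {φ : PForm α} {A : Set α} (M : Set α) (h : φ.atoms ⊆ A) :
    φ.sat (M ∩ A) ↔ φ.sat M := by
  induction φ with
  | tru | fls => rfl
  | atom a => exact and_iff_left (h rfl)
  | neg φ ih => exact not_congr (ih h)
  | conj φ χ ihφ ihχ =>
    exact and_congr (ihφ (Set.union_subset_iff.mp h).1) (ihχ (Set.union_subset_iff.mp h).2)
  | disj φ χ ihφ ihχ =>
    exact or_congr (ihφ (Set.union_subset_iff.mp h).1) (ihχ (Set.union_subset_iff.mp h).2)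

section Singleton

variable {u : α} {Z M N : Set α}

theorem lePZ_singleton_iff :
    lePZ {u} Z N M ↔ (u ∈ N → u ∈ M) ∧ N ∩ ({u} ∪ Z)ᶜ = M ∩ ({u} ∪ Z)ᶜ := by
  refine and_congr_left' ⟨fun h huN => (h ⟨huN, rfl⟩).1, ?_⟩
  rintro h x ⟨hxN, rfl⟩
  exact ⟨h hxN, rfl⟩

theorem ltPZ_singleton_iff :
    ltPZ {u} Z N M ↔ u ∉ N ∧ u ∈ M ∧ N ∩ ({u} ∪ Z)ᶜ = M ∩ ({u} ∪ Z)ᶜ := by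
  rw [ltPZ, lePZ_singleton_iff, lePZ_singleton_iff, eq_comm (a := M ∩ _)]
  tauto

theorem isCircModel_disj_atom_iff_of_mem {ψ : PForm α} (huM : u ∈ M) :
    IsCircModel (ψ.disj (.atom u)) {u} Z M ↔
      ∀ N : Set α, u ∉ N → N ∩ ({u} ∪ Z)ᶜ = M ∩ ({u} ∪ Z)ᶜ → ¬ ψ.sat N := by
  constructor
  · rintro ⟨-, hmin⟩ N huN hNM hψN
    exact hmin N (Or.inl hψN) (ltPZ_singleton_iff.mpr ⟨huN, huM, hNM⟩)
  · refine fun h => ⟨Or.inr huM, fun N hN hlt => ?_⟩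
    obtain ⟨huN, -, hNM⟩ := ltPZ_singleton_iff.mp hlt
    exact h N huN hNM (hN.resolve_right huN)

theorem circEntails_disj_atom_neg_atom_iff {ψ : PForm α} :
    CircEntails (ψ.disj (.atom u)) {u} Z (.neg (.atom u)) ↔
      ∀ M : Set α, ∃ N : Set α, u ∉ N ∧ N ∩ ({u} ∪ Z)ᶜ = M ∩ ({u} ∪ Z)ᶜ ∧ ψ.sat N := by
  constructor
  · intro h M
    have huM : u ∈ insert u M := Set.mem_insert u M
    have insert_fixed : insert u M ∩ ({u} ∪ Z)ᶜ = M ∩ ({u} ∪ Z)ᶜ :=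
      Set.insert_inter_of_notMem fun hu => hu (Or.inl rfl)
    by_contra! hno
    refine h (insert u M) ((isCircModel_disj_atom_iff_of_mem huM).mpr fun N huN hN => ?_) huM
    exact hno N huN (hN.trans insert_fixed)
  · intro h M hM huM
    obtain ⟨N, huN, hNM, hψN⟩ := h M
    exact (isCircModel_disj_atom_iff_of_mem huM).mp hM N huN hNM hψN

end Singleton

theorem inter_union_inter_eq_of_inter_compl_eq {X A M N : Set α} (Y : Set α)
    (hXA : Disjoint X A) (hNM : N ∩ Aᶜ = M ∩ Aᶜ) :
    (M ∩ X) ∪ (N ∩ Y) = N ∩ (X ∪ Y) := by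
  have agree_on_X : N ∩ X = M ∩ X := by
    rw [← Set.inter_eq_right.mpr hXA.subset_compl_right, ← Set.inter_assoc, hNM, Set.inter_assoc]
  rw [← agree_on_X, Set.inter_union_distrib_left]

theorem exists_sat_union_iff {X Y : Set α} {u : α} {ψ : PForm α} (hXY : Disjoint X Y)
    (hu : u ∉ X ∪ Y) (hatoms : ψ.atoms ⊆ X ∪ Y) (M : Set α) :
    (∃ I : Set α, ψ.sat ((M ∩ X) ∪ (I ∩ Y))) ↔
      ∃ N : Set α, u ∉ N ∧ N ∩ ({u} ∪ Y)ᶜ = M ∩ ({u} ∪ Y)ᶜ ∧ ψ.sat N := by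
  have huX : u ∉ X := fun h => hu (Or.inl h)
  have huY : u ∉ Y := fun h => hu (Or.inr h)
  have hX : Disjoint X ({u} ∪ Y) :=
    Set.disjoint_union_right.mpr ⟨Set.disjoint_singleton_right.mpr huX, hXY⟩
  have sat_iff {N : Set α} (hNM : N ∩ ({u} ∪ Y)ᶜ = M ∩ ({u} ∪ Y)ᶜ) :
      ψ.sat ((M ∩ X) ∪ (N ∩ Y)) ↔ ψ.sat N := by
    rw [inter_union_inter_eq_of_inter_compl_eq Y hX hNM, PForm.sat_inter_iff N hatoms]
  constructor
  · rintro ⟨I, hI⟩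
    let N : Set α := (M ∩ ({u} ∪ Y)ᶜ) ∪ (I ∩ Y)
    have huN : u ∉ N := by simp [N, huY]
    have hNM : N ∩ ({u} ∪ Y)ᶜ = M ∩ ({u} ∪ Y)ᶜ := by grind
    have hNI : N ∩ Y = I ∩ Y := by grind
    exact ⟨N, huN, hNM, (sat_iff hNM).mp (hNI ▸ hI)⟩
  · rintro ⟨N, -, hNM, hψN⟩
    exact ⟨N, (sat_iff hNM).mpr hψN⟩

theorem qbf_iff_circ_entails_not_u_general {X Y : Set α} {u : α} {ψ : PForm α}
    (hXY : Disjoint X Y) (hu : u ∉ X ∪ Y) (hatoms : ψ.atoms ⊆ X ∪ Y) :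
    (∀ IX : Set α, ∃ IY : Set α, ψ.sat ((IX ∩ X) ∪ (IY ∩ Y))) ↔
      CircEntails (ψ.disj (.atom u)) {u} Y (.neg (.atom u)) :=
  (forall_congr' (exists_sat_union_iff hXY hu hatoms)).trans
    circEntails_disj_atom_neg_atom_iff.symm

/-- Let `Φ = ∀X ∃Y ψ` be a QBF, where `ψ` is propositional over the
disjoint atom sets `X` and `Y`, let `u` be a fresh atom, and let `φ = ψ ∨ u`.  Then `Φ`
is true if and only if `CIRC(φ; u; Y) ⊨ ¬u`, i.e., every model of `φ` that is minimal
in `u` while `Y` varies and `X` stays fixed satisfies `¬u`. -/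
theorem qbf_iff_circ_entails_not_u (X Y : Set α) (u : α) (ψ : PForm α)
    (hXY : Disjoint X Y) (hu : u ∉ X ∪ Y) (hAt : X ∪ Y ∪ {u} = Set.univ)
    (hatoms : ψ.atoms ⊆ X ∪ Y) :
    (∀ IX : Set α, ∃ IY : Set α, ψ.sat ((IX ∩ X) ∪ (IY ∩ Y))) ↔
      (∀ M : Set α,
        ((ψ.disj (.atom u)).sat M ∧
          ∀ N : Set α, (ψ.disj (.atom u)).sat N → ¬ ltPZ {u} Y N M) →
        u ∉ M) :=
  qbf_iff_circ_entails_not_u_general hXY hu hatoms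

end NestedCirc
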